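/- Let X and Y be topological spaces, with X = |K| the polyhedron of a finite simplicial r-complex K such that H_r(X; ℤ/2) ≠ 0, and let φ : |K| → Y be a homeomorphism. Fix a nonzero r-cycle σ = Σᵢ σᵢ in C_r(K; ℤ/2). Then for every continuous f̄ : Y → Y homotopic to the identity of Y, one has ⋃ᵢ (φ ∘ σᵢ)(Δ_r) ⊆ f̄(Y). -/

import Mathlib

open Geometry

set_option linter.unusedSectionVars false

namespace St12

noncomputable section

/-- mod 2 chains on lists of points (augmented ordered chains). -/
abbrev Ch (V : Type*) := List V →₀ ZMod 2

variable {V W : Type*}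

abbrev sg (l : List V) : Ch V := Finsupp.single l 1

lemma ch_two (z : Ch V) : z + z = 0 := by
  ext l; simp [CharTwo.add_self_eq_zero]

/-- extension of a map on lists -/
def ext {A : Type*} [AddCommGroup A] [Module (ZMod 2) A] (f : List V → A) : Ch V →ₗ[ZMod 2] A :=
  Finsupp.linearCombination (ZMod 2) f

@[simp] lemma ext_sg {A : Type*} [AddCommGroup A] [Module (ZMod 2) A] (f : List V → A)
    (l : List V) : ext f (sg l) = f l := by simp [ext, sg]

lemma hom_eq {A : Type*} [AddCommGroup A] [Module (ZMod 2) A] {f g : Ch V →ₗ[ZMod 2] A}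
    (h : ∀ l, f (sg l) = g (sg l)) (z : Ch V) : f z = g z := by
  have : f = g := by
    apply Finsupp.lhom_ext'
    intro l
    apply LinearMap.ext_ring
    simpa using h l
  rw [this]

/-- chains supported on a set of lists -/
abbrev Sup (P : Set (List V)) : Submodule (ZMod 2) (Ch V) := Finsupp.supported (ZMod 2) (ZMod 2) P

lemma sg_mem {P : Set (List V)} {l : List V} (h : l ∈ P) : sg l ∈ Sup P :=
  Finsupp.single_mem_supported _ _ h

lemma sup_mono {P Q : Set (List V)} (h : P ⊆ Q) {z : Ch V} (hz : z ∈ Sup P) : z ∈ Sup Q :=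
  Finsupp.supported_mono h hz

lemma sup_ind {A : Type*} [AddCommGroup A] [Module (ZMod 2) A] (f : Ch V →ₗ[ZMod 2] A)
    (Q : Submodule (ZMod 2) A) {P : Set (List V)} (h : ∀ l ∈ P, f (sg l) ∈ Q)
    {z : Ch V} (hz : z ∈ Sup P) : f z ∈ Q := by
  have : Sup P ≤ Q.comap f := by
    unfold Sup
    rw [Finsupp.supported_eq_span_single, Submodule.span_le]
    rintro _ ⟨l, hl, rfl⟩
    exact h l hl
  exact this hz

lemma sup_eq {A : Type*} [AddCommGroup A] [Module (ZMod 2) A] (f g : Ch V →ₗ[ZMod 2] A)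
    {P : Set (List V)} (h : ∀ l ∈ P, f (sg l) = g (sg l))
    {z : Ch V} (hz : z ∈ Sup P) : f z = g z := by
  have := sup_ind (f - g) ⊥ (P := P) (fun l hl => by simp [h l hl]) hz
  simpa [sub_eq_zero] using this

/-- cone -/
def cone (x : V) : Ch V →ₗ[ZMod 2] Ch V := ext (fun l => sg (x :: l))

@[simp] lemma cone_sg (x : V) (l : List V) : cone x (sg l) = sg (x :: l) := by simp [cone]

def dL : List V → Ch V
  | [] => 0
  | x :: l => sg l + cone x (dL l)

/-- boundary -/
def bd : Ch V →ₗ[ZMod 2] Ch V := ext dL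

@[simp] lemma bd_sg (l : List V) : bd (sg l) = dL l := by simp [bd]

lemma bd_cone (x : V) (z : Ch V) : bd (cone x z) = z + cone x (bd z) := by
  refine hom_eq (f := bd ∘ₗ cone x) (g := LinearMap.id + cone x ∘ₗ bd) (fun l => ?_) z
  simp [dL]

lemma bd_dL (l : List V) : bd (dL l) = 0 := by
  induction l with
  | nil => simp [dL]
  | cons x l ih => simp [dL, bd_cone, ih, ch_two]

/-- push forward -/
def push (f : V → W) : Ch V →ₗ[ZMod 2] Ch W := ext (fun l => sg (l.map f))

@[simp] lemma push_sg (f : V → W) (l : List V) : push f (sg l) = sg (l.map f) := by simp [push]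

lemma push_cone (f : V → W) (x : V) (z : Ch V) : push f (cone x z) = cone (f x) (push f z) := by
  refine hom_eq (f := push f ∘ₗ cone x) (g := cone (f x) ∘ₗ push f) (fun l => ?_) z
  simp

lemma push_dL (f : V → W) (l : List V) : push f (dL l) = dL (l.map f) := by
  induction l with
  | nil => simp [dL]
  | cons x l ih => simp [dL, push_cone, ih]

lemma bd_push (f : V → W) (z : Ch V) : bd (push f z) = push f (bd z) := by
  refine hom_eq (f := bd ∘ₗ push f) (g := push f ∘ₗ bd) (fun l => ?_) z
  simp [push_dL]

def pL (f g : V → W) : List V → Ch W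
  | [] => 0
  | x :: l => cone (f x) (sg (g x :: l.map g)) + cone (f x) (pL f g l)

/-- prism -/
def prism (f g : V → W) : Ch V →ₗ[ZMod 2] Ch W := ext (pL f g)

@[simp] lemma prism_sg (f g : V → W) (l : List V) : prism f g (sg l) = pL f g l := by simp [prism]

lemma prism_cone (f g : V → W) (x : V) (z : Ch V) : prism f g (cone x z) =
    cone (f x) (cone (g x) (push g z)) + cone (f x) (prism f g z) := by
  refine hom_eq (f := prism f g ∘ₗ cone x)
    (g := cone (f x) ∘ₗ cone (g x) ∘ₗ push g + cone (f x) ∘ₗ prism f g) (fun l => ?_) z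
  simp [pL]

lemma prism_L (f g : V → W) (l : List V) :
    bd (pL f g l) = sg (l.map f) + sg (l.map g) + prism f g (dL l) := by
  induction l with
  | nil => simp [dL, pL, ch_two]
  | cons x l ih =>
    simp only [pL, dL, map_add, bd_cone, ih, prism_cone, push_dL, bd_sg, List.map_cons, cone_sg,
      prism_sg]
    have := ch_two (sg (f x :: l.map g))
    refine sub_eq_zero.1 (Eq.trans ?_ this)
    abel

lemma prism_bd (f g : V → W) (z : Ch V) :
    bd (prism f g z) = push f z + push g z + prism f g (bd z) := by
  refine hom_eq (f := bd ∘ₗ prism f g) (g := push f + push g + prism f g ∘ₗ bd) (fun l => ?_) z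
  simp [prism_L]

open Classical in
/-- indicator of permutations of `τ` -/
def chi (τ : Multiset V) : Ch V →ₗ[ZMod 2] ZMod 2 :=
  ext (fun l => if (l : Multiset V) = τ then 1 else 0)

open Classical in
@[simp] lemma chi_sg (τ : Multiset V) (l : List V) :
    chi τ (sg l) = if (l : Multiset V) = τ then 1 else 0 := by simp [chi]

open Classical in
lemma chi_cone (τ : Multiset V) (x : V) (z : Ch V) :
    chi τ (cone x z) = if x ∈ τ then chi (τ.erase x) z else 0 := by
  split_ifs with h
  · refine hom_eq (f := chi τ ∘ₗ cone x) (g := chi (τ.erase x)) (fun l => ?_) z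
    obtain ⟨t, rfl⟩ := Multiset.exists_cons_of_mem h
    simp [← Multiset.cons_coe]
  · refine hom_eq (f := chi τ ∘ₗ cone x) (g := 0) (fun l => ?_) z
    have : ¬ (((x :: l : List V) : Multiset V) = τ) := by
      rintro rfl; simp at h
    simp [this]

open Classical in
lemma chi_dL (τ : Multiset V) (k : List V) :
    chi τ (dL k) = (k.countP (fun y => (k : Multiset V) = y ::ₘ τ) : ℕ) := by
  induction k generalizing τ with
  | nil => simp [dL]
  | cons x l ih =>
    simp only [dL, map_add, chi_cone, chi_sg, ih]
    rw [List.countP_cons]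
    have e1 : ((x :: l : List V) : Multiset V) = x ::ₘ τ ↔ (l : Multiset V) = τ := by
      simp [← Multiset.cons_coe]
    simp only [e1, decide_eq_true_eq]
    rw [Nat.cast_add, add_comm]
    congr 1
    swap
    · split_ifs <;> simp
    split_ifs with h
    · obtain ⟨t, rfl⟩ := Multiset.exists_cons_of_mem h
      congr 2
      funext y
      rw [decide_eq_decide, ← Multiset.cons_coe, Multiset.erase_cons_head, Multiset.cons_swap,
        Multiset.cons_inj_right]
    · symm
      have : List.countP (fun y => decide (((x :: l : List V) : Multiset V) = y ::ₘ τ)) l = 0 := by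
        rw [List.countP_eq_zero]
        intro y hy hh
        simp only [decide_eq_true_eq] at hh
        have hx : x ∈ y ::ₘ τ := by rw [← hh]; simp
        rcases Multiset.mem_cons.1 hx with rfl | hx
        · rw [e1] at hh
          apply h; rw [← hh]; simpa using hy
        · exact h hx
      simp [this]

open Classical in
lemma chi_key {τ : Multiset V} {w : V} (hw : w ∉ τ) (hτ : τ.Nodup) {k : List V}
    (hk : ∀ x ∈ k, x ∈ w ::ₘ τ) : chi τ (dL k) = chi (w ::ₘ τ) (sg k) := by
  rw [chi_dL, chi_sg]
  by_cases h : ∃ y ∈ k, (k : Multiset V) = y ::ₘ τ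
  · obtain ⟨y, hy, e⟩ := h
    have e2 : k.countP (fun y => decide ((k : Multiset V) = y ::ₘ τ)) = (k : Multiset V).count y := by
      rw [Multiset.coe_count, List.count]
      congr 1
      funext z
      have : (k : Multiset V) = z ::ₘ τ ↔ z = y := by
        rw [e, Multiset.cons_inj_left]; exact eq_comm
      simp only [this]
      by_cases hz : z = y <;> simp [hz]
    rw [e2, e, Multiset.count_cons_self]
    rcases Multiset.mem_cons.1 (hk y hy) with rfl | h2
    · simp [Multiset.count_eq_zero_of_notMem hw]
    · rw [Multiset.count_eq_one_of_mem hτ h2]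
      have : y ≠ w := by rintro rfl; exact hw h2
      rw [if_neg]
      · decide
      · rw [Multiset.cons_inj_left]; exact this
  · have e2 : k.countP (fun y => decide ((k : Multiset V) = y ::ₘ τ)) = 0 := by
      rw [List.countP_eq_zero]
      intro y hy hh
      exact h ⟨y, hy, by simpa using hh⟩
    rw [e2, if_neg]
    · simp
    · intro e
      refine h ⟨w, ?_, e⟩
      have : w ∈ (k : Multiset V) := by rw [e]; simp
      simpa using this

lemma pL_sup (f g : V → W) (l : List V) :
    pL f g l ∈ Sup {k | ∀ y ∈ k, ∃ x ∈ l, y = f x ∨ y = g x} := by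
  induction l with
  | nil => simp [pL]
  | cons x l ih =>
    rw [pL, ← map_add]
    refine sup_ind (cone (f x)) _ (P := {k | ∀ y ∈ k, ∃ x' ∈ x :: l, y = f x' ∨ y = g x'}) ?_ ?_
    · intro k hk
      rw [cone_sg]
      apply sg_mem
      intro y hy
      rcases List.mem_cons.1 hy with rfl | hy
      · exact ⟨x, by simp, Or.inl rfl⟩
      · exact hk y hy
    · apply Submodule.add_mem
      · apply sg_mem
        intro y hy
        rcases List.mem_cons.1 hy with rfl | hy
        · exact ⟨x, by simp, Or.inr rfl⟩
        · obtain ⟨a, ha, rfl⟩ := List.mem_map.1 hy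
          exact ⟨a, by simp [ha], Or.inr rfl⟩
      · refine sup_mono ?_ ih
        intro k hk y hy
        obtain ⟨a, ha, h⟩ := hk y hy
        exact ⟨a, by simp [ha], h⟩

lemma invariance {z : Ch V} (hz : bd z = 0) {P : Set (List V)} (hP : z ∈ Sup P)
    {τ : Multiset W} {w : W} (hw : w ∉ τ) (hτ : τ.Nodup) (f g : V → W)
    (hf : ∀ x, f x ∈ w ::ₘ τ) (hg : ∀ x, g x ∈ w ::ₘ τ)
    (hs : ∀ k ∈ P, ∃ a ∈ w ::ₘ τ, ∀ x ∈ k, f x ≠ a ∧ g x ≠ a) :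
    chi τ (push f z) = chi τ (push g z) := by
  classical
  have h1 := congrArg (chi τ) (prism_bd f g z)
  have h2 : chi τ (bd (prism f g z)) = 0 := by
    refine sup_eq (chi τ ∘ₗ bd ∘ₗ prism f g) 0 ?_ hP
    intro k hk
    simp only [LinearMap.comp_apply, prism_sg, LinearMap.zero_apply]
    refine sup_eq (chi τ ∘ₗ bd) 0 ?_ (pL_sup f g k)
    intro k' hk'
    simp only [LinearMap.comp_apply, bd_sg, LinearMap.zero_apply]
    rw [chi_key hw hτ, chi_sg, if_neg]
    · intro e
      obtain ⟨a, ha, h⟩ := hs k hk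
      rw [← e] at ha
      obtain ⟨x, hx, h'⟩ := hk' a (by simpa using ha)
      rcases h' with h' | h'
      · exact (h x hx).1 h'.symm
      · exact (h x hx).2 h'.symm
    · intro y hy
      obtain ⟨x, hx, h'⟩ := hk' y hy
      rcases h' with rfl | rfl
      · exact hf x
      · exact hg x
  rw [h2, hz] at h1
  simp only [map_zero, add_zero, map_add] at h1
  exact (CharTwo.add_eq_zero.1 h1.symm)


lemma dL_sup (l : List V) : dL l ∈ Sup {k | k.length + 1 = l.length ∧ k ⊆ l} := by
  induction l with
  | nil => simp [dL]
  | cons x l ih =>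
    rw [dL]
    apply Submodule.add_mem
    · apply sg_mem
      simp
    · refine sup_ind (cone x) _ ?_ ih
      rintro k ⟨h1, h2⟩
      rw [cone_sg]
      apply sg_mem
      refine ⟨by simp [h1], ?_⟩
      exact List.cons_subset_cons x h2

section subdiv

variable {E : Type*} [NormedAddCommGroup E] [NormedSpace ℝ E]

/-- barycenter -/
def bary (l : List E) : E := (l.length : ℝ)⁻¹ • l.sum

abbrev hull (l : List E) : Set E := convexHull ℝ {y | y ∈ l}

lemma hull_mono {k l : List E} (h : k ⊆ l) : hull k ⊆ hull l :=
  convexHull_mono (fun _ hx => h hx)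

lemma sum_sub_bound (l : List E) (x : E) (D : ℝ) (h : ∀ y ∈ l, dist x y ≤ D) :
    ‖l.sum - (l.length : ℝ) • x‖ ≤ l.length * D := by
  induction l with
  | nil => simp
  | cons a l ih =>
    have h1 := ih (fun y hy => h y (by simp [hy]))
    have h2 := h a (by simp)
    have e : (a :: l).sum - ((a :: l).length : ℝ) • x =
        (a - x) + (l.sum - (l.length : ℝ) • x) := by
      simp only [List.sum_cons, List.length_cons, Nat.cast_add, Nat.cast_one]
      module
    rw [e]
    refine (norm_add_le _ _).trans ?_
    rw [dist_comm, dist_eq_norm] at h2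
    push_cast [List.length_cons]
    linarith

lemma sum_mem_aux (S : Set E) (hS : Convex ℝ S) (l : List E) (hl : l ≠ []) (h : ∀ y ∈ l, y ∈ S) :
    bary l ∈ S := by
  induction l with
  | nil => exact absurd rfl hl
  | cons a l ih =>
    by_cases h0 : l = []
    · subst h0; simpa [bary] using h
    · have h1 := ih h0 (fun y hy => h y (by simp [hy]))
      have h2 := h a (by simp)
      have hn : (0 : ℝ) < l.length := by
        exact_mod_cast List.length_pos_of_ne_nil h0
      have hpos : (0:ℝ) < (l.length : ℝ) + 1 := by positivity
      have := hS h2 h1 (a := ((l.length : ℝ) + 1)⁻¹) (b := (l.length : ℝ) * ((l.length : ℝ) + 1)⁻¹)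
        (by positivity) (by positivity) (by field_simp; ring)
      convert this using 1
      simp only [bary, List.sum_cons, List.length_cons, Nat.cast_add, Nat.cast_one, smul_add,
        smul_smul]
      congr 2
      field_simp

lemma bary_mem (l : List E) (hl : l ≠ []) : bary l ∈ hull l :=
  sum_mem_aux _ (convex_convexHull ℝ _) l hl (fun _ hy => subset_convexHull ℝ _ hy)

def Small (D : ℝ) (l : List E) : Prop := ∀ x ∈ l, ∀ y ∈ l, dist x y ≤ D

lemma bary_dist (r : ℕ) (l : List E) (hl : l.length ≤ r + 1) (D : ℝ) (hD : Small D l)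
    (x : E) (hx : x ∈ l) : dist x (bary l) ≤ (r / (r + 1) : ℝ) * D := by
  classical
  have hD0 : 0 ≤ D := by simpa using hD x hx x hx
  obtain ⟨k, hk⟩ : ∃ k, l.Perm (x :: k) := ⟨l.erase x, List.perm_cons_erase hx⟩
  have e1 : l.length = k.length + 1 := by simpa using hk.length_eq
  have e2 : l.sum = x + k.sum := by simpa using hk.sum_eq
  have hb := sum_sub_bound k x D (fun y hy => hD x hx y (hk.mem_iff.2 (by simp [hy])))
  have hpos : (0:ℝ) < (k.length : ℝ) + 1 := by positivity
  have e3 : bary l - x = ((k.length : ℝ) + 1)⁻¹ • (k.sum - (k.length : ℝ) • x) := by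
    rw [bary, e1, e2]
    push_cast
    rw [eq_inv_smul_iff₀ hpos.ne', smul_sub, smul_inv_smul₀ hpos.ne']
    module
  rw [dist_comm, dist_eq_norm, e3, norm_smul, Real.norm_of_nonneg (by positivity)]
  have hkr : (k.length : ℝ) ≤ r := by
    have : k.length ≤ r := by omega
    exact_mod_cast this
  calc ((k.length : ℝ) + 1)⁻¹ * ‖k.sum - (k.length : ℝ) • x‖
      ≤ ((k.length : ℝ) + 1)⁻¹ * (k.length * D) := by gcongr
    _ = (k.length / (k.length + 1) : ℝ) * D := by field_simp
    _ ≤ (r / (r + 1) : ℝ) * D := by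
      gcongr ?_ * D
      rw [div_le_div_iff₀ hpos (by positivity)]
      nlinarith

lemma hull_dist (r : ℕ) (l : List E) (hl : l.length ≤ r + 1) (D : ℝ) (hD : Small D l)
    (x : E) (hx : x ∈ hull l) : dist x (bary l) ≤ (r / (r + 1) : ℝ) * D := by
  have : hull l ⊆ Metric.closedBall (bary l) ((r / (r + 1) : ℝ) * D) := by
    apply convexHull_min
    · intro y hy
      exact bary_dist r l hl D hD y hy
    · exact convex_closedBall _ _
  exact this hx

/-- subdivision on chains of lists of length `n` -/
def sd : ℕ → Ch E →ₗ[ZMod 2] Ch E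
  | 0 => LinearMap.id
  | n + 1 => ext (fun l => cone (bary l) (sd n (dL l)))

lemma sd_zero (z : Ch E) : sd 0 z = z := rfl

lemma sd_succ (n : ℕ) (l : List E) : sd (n + 1) (sg l) = cone (bary l) (sd n (dL l)) := by
  rw [sd, ext_sg]

lemma sd_sup (r : ℕ) (n : ℕ) (hn : n ≤ r + 1) (l : List E) (hl : l.length = n) :
    sd n (sg l) ∈ Sup {k | k.length = n ∧ (∀ x ∈ k, x ∈ hull l) ∧
      ∀ D, Small D l → Small ((r / (r + 1) : ℝ) * D) k} := by
  induction n generalizing l with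
  | zero =>
    have : l = [] := List.length_eq_zero_iff.1 hl
    subst this
    apply sg_mem
    simp [Small]
  | succ n ih =>
    have hne : l ≠ [] := by rintro rfl; simp at hl
    rw [sd_succ]
    refine sup_ind (cone (bary l) ∘ₗ sd n) _ ?_ (dL_sup l)
    rintro l' ⟨h1, h2⟩
    rw [LinearMap.comp_apply]
    refine sup_ind (cone (bary l)) _ ?_ (ih (by omega) l' (by omega))
    rintro k ⟨k1, k2, k3⟩
    rw [cone_sg]
    apply sg_mem
    have hh : ∀ x ∈ bary l :: k, x ∈ hull l := by
      intro x hx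
      rcases List.mem_cons.1 hx with rfl | hx
      · exact bary_mem l hne
      · exact hull_mono h2 (k2 x hx)
    refine ⟨by simp [k1], hh, ?_⟩
    intro D hD x hx y hy
    have hD' : Small D l' := fun a ha b hb => hD a (h2 ha) b (h2 hb)
    rcases List.mem_cons.1 hy with rfl | hy'
    · exact hull_dist r l (by omega) D hD x (hh x hx)
    · rcases List.mem_cons.1 hx with rfl | hx'
      · rw [dist_comm]
        exact hull_dist r l (by omega) D hD y (hh y hy)
      · exact k3 D hD' x hx' y hy'

lemma bd_sd (n : ℕ) (z : Ch E) (hz : z ∈ Sup {l | l.length = n + 1}) :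
    bd (sd (n + 1) z) = sd n (bd z) := by
  induction n generalizing z with
  | zero =>
    have key := sup_eq (bd ∘ₗ sd (0 + 1)) (sd 0 ∘ₗ bd) (P := {l : List E | l.length = 0 + 1}) ?_ hz
    · rwa [LinearMap.comp_apply, LinearMap.comp_apply] at key
    intro l hl
    obtain ⟨a, rfl⟩ := List.length_eq_one_iff.1 hl
    rw [LinearMap.comp_apply, LinearMap.comp_apply, bd_sg, sd_succ, sd_zero, bd_cone]
    simp [dL]
  | succ n ih =>
    have key := sup_eq (bd ∘ₗ sd (n + 1 + 1)) (sd (n + 1) ∘ₗ bd) (P := {l : List E | l.length = n + 1 + 1}) ?_ hz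
    · rwa [LinearMap.comp_apply, LinearMap.comp_apply] at key
    intro l hl
    rw [LinearMap.comp_apply, LinearMap.comp_apply, bd_sg, sd_succ, bd_cone, ih, bd_dL]
    · simp
    · refine sup_mono ?_ (dL_sup l)
      rintro k ⟨h1, -⟩
      simp only [Set.mem_ofPred_eq] at hl ⊢
      omega

/-- iterated subdivision -/
def sdN (n N : ℕ) : Ch E →ₗ[ZMod 2] Ch E := (sd n) ^ N

lemma sdN_succ (n N : ℕ) (z : Ch E) : sdN n (N + 1) z = sd n (sdN n N z) := by
  simp [sdN, pow_succ']

lemma sdN_sup (r : ℕ) (n : ℕ) (hn : n ≤ r + 1) (N : ℕ) (l : List E) (hl : l.length = n) :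
    sdN n N (sg l) ∈ Sup {k | k.length = n ∧ (∀ x ∈ k, x ∈ hull l) ∧
      ∀ D, Small D l → Small ((r / (r + 1) : ℝ) ^ N * D) k} := by
  induction N with
  | zero =>
    apply sg_mem
    exact ⟨hl, fun x hx => subset_convexHull ℝ _ hx, by simp⟩
  | succ N ih =>
    rw [sdN_succ]
    refine sup_ind (sd n) _ ?_ ih
    rintro k ⟨k1, k2, k3⟩
    refine sup_mono ?_ (sd_sup r n hn k k1)
    rintro k' ⟨h1, h2, h3⟩
    refine ⟨h1, ?_, ?_⟩
    · intro x hx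
      exact convexHull_min (fun y hy => k2 y hy) (convex_convexHull ℝ _) (h2 x hx)
    · intro D hD
      have := h3 _ (k3 D hD)
      rwa [← mul_assoc, ← pow_succ'] at this

lemma sdN_len (n N : ℕ) (z : Ch E) (hz : z ∈ Sup {l | l.length = n}) :
    sdN n N z ∈ Sup {l | l.length = n} := by
  refine sup_ind (sdN n N) _ ?_ hz
  intro l hl
  refine sup_mono ?_ (sdN_sup n n (by omega) N l hl)
  rintro k ⟨h, -⟩
  exact h

lemma bd_sdN (n N : ℕ) (z : Ch E) (hz : z ∈ Sup {l | l.length = n + 1}) :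
    bd (sdN (n + 1) N z) = sdN n N (bd z) := by
  induction N with
  | zero => simp [sdN]
  | succ N ih => rw [sdN_succ, bd_sd _ _ (sdN_len _ _ _ hz), ih, ← sdN_succ]

lemma sperner (N : ℕ) (f : E → E) (l : List E) (hl : l.Nodup)
    (hf : ∀ t, t ⊆ l → ∀ x ∈ hull t, f x ∈ t) :
    chi (l : Multiset E) (push f (sdN l.length N (sg l))) = 1 := by
  classical
  induction l with
  | nil =>
    have h := sdN_sup 0 0 (by omega) N ([] : List E) rfl
    have : sdN 0 N (sg ([] : List E)) = sg [] := by
      induction N with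
      | zero => rfl
      | succ N ih => rw [sdN_succ, ih]; rfl; exact sdN_sup 0 0 (by omega) N ([] : List E) rfl
    simp [this]
  | cons v l ih =>
    have hv : v ∉ l := (List.nodup_cons.1 hl).1
    have hl' := (List.nodup_cons.1 hl).2
    have hv' : v ∉ (l : Multiset E) := by simpa using hv
    set n := l.length with hn
    have e1 : chi ((v :: l : List E) : Multiset E) (push f (sdN (n + 1) N (sg (v :: l)))) =
        chi (l : Multiset E) (bd (push f (sdN (n + 1) N (sg (v :: l))))) := by
      refine sup_eq (chi ((v :: l : List E) : Multiset E) ∘ₗ push f)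
        (chi (l : Multiset E) ∘ₗ bd ∘ₗ push f) ?_
        (sdN_sup n (n + 1) le_rfl N (v :: l) (by simp [hn]))
      rintro k ⟨k1, k2, -⟩
      simp only [LinearMap.comp_apply, push_sg, bd_sg]
      rw [chi_key hv' (by simpa using hl'), Multiset.cons_coe]
      intro x hx
      obtain ⟨y, hy, rfl⟩ := List.mem_map.1 hx
      have := hf (v :: l) (fun _ h => h) y (k2 y hy)
      simpa using this
    have e2 : chi (l : Multiset E) (push f (sdN n N (cone v (dL l)))) = 0 := by
      refine sup_eq (chi (l : Multiset E) ∘ₗ push f ∘ₗ sdN n N ∘ₗ cone v) 0 ?_ (dL_sup l)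
      rintro k ⟨k1, k2⟩
      simp only [LinearMap.comp_apply, cone_sg, LinearMap.zero_apply]
      have : ∃ y ∈ l, y ∉ k := by
        by_contra! hcon
        have := (List.subperm_of_subset hl' hcon).length_le
        omega
      obtain ⟨y, hy, hyk⟩ := this
      refine sup_eq (chi (l : Multiset E) ∘ₗ push f) 0 ?_
        (sdN_sup n n (by omega) N (v :: k) (by simp [k1, hn]))
      rintro k' ⟨-, h2, -⟩
      simp only [LinearMap.comp_apply, push_sg, LinearMap.zero_apply]
      rw [chi_sg, if_neg]
      intro e
      have : y ∈ ((k'.map f : List E) : Multiset E) := by rw [e]; simpa using hy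
      rw [Multiset.mem_coe] at this
      obtain ⟨x, hx, hxy⟩ := List.mem_map.1 this
      have h4 := hf (v :: k) (List.cons_subset_cons v k2) x (h2 x hx)
      rw [hxy] at h4
      rcases List.mem_cons.1 h4 with rfl | h4
      · exact hv hy
      · exact hyk h4
    rw [List.length_cons, e1, bd_push, bd_sdN _ _ _ (sg_mem (by simp [hn])), bd_sg, dL, map_add,
      map_add, map_add, e2, add_zero]
    exact ih hl' (fun t ht => hf t (fun _ h => List.mem_cons_of_mem _ (ht h)))

end subdiv

lemma exists_order [DecidableEq V] : ∃ o : Finset V → List V,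
    (∀ s, (o s : Multiset V) = s.val) ∧ ∀ s, dL (o s) = ∑ x ∈ s, sg (o (s.erase x)) := by
  classical
  let _ : LinearOrder V := linearOrderOfSTO WellOrderingRel
  refine ⟨fun s => s.sort (· ≤ ·), fun s => by simp, fun s => ?_⟩
  induction s using Finset.induction_on_min with
  | empty => simp [dL]
  | insert a s ha ih =>
    have ha' : a ∉ s := fun h => lt_irrefl _ (ha a h)
    have hs : ∀ t ⊆ s, (insert a t).sort (· ≤ ·) = a :: t.sort (· ≤ ·) := by
      intro t ht
      convert Finset.sort_insert (· ≤ ·) (a := a) (s := t) (fun b hb => (ha b (ht hb)).le)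
        (fun h => ha' (ht h))
    simp only [] at ih ⊢
    rw [hs s subset_rfl, dL, ih, Finset.sum_insert ha', Finset.erase_insert ha', map_sum]
    congr 1
    refine Finset.sum_congr rfl fun x hx => ?_
    have hne : a ≠ x := by rintro rfl; exact ha' hx
    rw [cone_sg, Finset.erase_insert_of_ne hne, hs _ (Finset.erase_subset _ _)]


section geom

variable {E : Type*} [NormedAddCommGroup E] [NormedSpace ℝ E]

/-- points of the simplex `s` whose `v`-coordinate is at least `p v` -/
def Acov (s : Finset E) (p : E → ℝ) (v : E) : Set E :=
  {x | ∃ w : E → ℝ, (∀ y ∈ s, 0 ≤ w y) ∧ ∑ y ∈ s, w y = 1 ∧ ∑ y ∈ s, w y • y = x ∧ p v ≤ w v}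

lemma Acov_closed (s : Finset E) (p : E → ℝ) (v : E) (hv : v ∈ s) : IsClosed (Acov s p v) := by
  classical
  have hc : IsCompact (stdSimplex ℝ s ∩ {w | p v ≤ w ⟨v, hv⟩}) := by
    apply (isCompact_stdSimplex ℝ s).inter_right
    exact isClosed_le continuous_const (continuous_apply _)
  have hcont : Continuous (fun w : s → ℝ => ∑ i, w i • (i : E)) := by fun_prop
  have e : Acov s p v = (fun w : s → ℝ => ∑ i, w i • (i : E)) ''
      (stdSimplex ℝ s ∩ {w | p v ≤ w ⟨v, hv⟩}) := by
    ext x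
    constructor
    · rintro ⟨w, h1, h2, h3, h4⟩
      refine ⟨fun i => w i, ⟨⟨fun i => h1 i i.2, ?_⟩, h4⟩, ?_⟩
      · rw [← h2]; exact Finset.sum_coe_sort s w
      · rw [← h3]; exact Finset.sum_coe_sort s (fun i => w i • i)
    · rintro ⟨w, ⟨⟨h1, h2⟩, h4⟩, rfl⟩
      refine ⟨fun y => if h : y ∈ s then w ⟨y, h⟩ else 0, ?_, ?_, ?_, ?_⟩
      · intro y hy; simpa [hy] using h1 ⟨y, hy⟩
      · rw [← h2, ← Finset.sum_coe_sort]; simp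
      · rw [← Finset.sum_coe_sort]; simp
      · simpa [hv] using h4
  rw [e]
  exact (hc.image hcont).isClosed

lemma coord_unique {s : Finset E} (hs : AffineIndependent ℝ ((↑) : s → E)) {w w' : E → ℝ}
    (h1 : ∑ y ∈ s, w y = 1) (h1' : ∑ y ∈ s, w' y = 1)
    (h2 : ∑ y ∈ s, w y • y = ∑ y ∈ s, w' y • y) : ∀ y ∈ s, w y = w' y := by
  have := hs.eq_zero_of_sum_eq_zero_subtype (w := fun y => w y - w' y)
    (by rw [Finset.sum_sub_distrib, h1, h1', sub_self])
    (by simp only [sub_smul]; rw [Finset.sum_sub_distrib, h2, sub_self])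
  intro y hy
  exact sub_eq_zero.1 (this y hy)

lemma coord_face {s t : Finset E} (hs : AffineIndependent ℝ ((↑) : s → E)) (hts : t ⊆ s)
    {w : E → ℝ} {x : E} (h1 : ∑ y ∈ s, w y = 1) (h2 : ∑ y ∈ s, w y • y = x)
    (hx : x ∈ convexHull ℝ (t : Set E)) {v : E} (hv : v ∈ s) (hpos : 0 < w v) : v ∈ t := by
  classical
  obtain ⟨w', -, b, c⟩ := Finset.mem_convexHull'.1 hx
  by_contra hvt
  have := coord_unique hs (w := w) (w' := fun y => if y ∈ t then w' y else 0) h1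
    (by rw [Finset.sum_ite_mem, Finset.inter_eq_right.2 hts, b])
    (by simp only [ite_smul, zero_smul]
        rw [Finset.sum_ite_mem, Finset.inter_eq_right.2 hts, c, h2]) v hv
  simp [hvt] at this
  linarith

lemma Acov_face {s t : Finset E} (hs : AffineIndependent ℝ ((↑) : s → E)) (hts : t ⊆ s)
    {p : E → ℝ} (hp : ∀ v ∈ s, 0 < p v) {x : E} (hx : x ∈ convexHull ℝ (t : Set E))
    {v : E} (hv : v ∈ s) (hA : x ∈ Acov s p v) : v ∈ t := by
  obtain ⟨w, -, h2, h3, h4⟩ := hA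
  exact coord_face hs hts h2 h3 hx hv (lt_of_lt_of_le (hp v hv) h4)

lemma Acov_cover {s : Finset E} {p : E → ℝ} (hp1 : ∑ v ∈ s, p v = 1)
    {x : E} (hx : x ∈ convexHull ℝ (s : Set E)) : ∃ v ∈ s, x ∈ Acov s p v := by
  obtain ⟨w, a, b, c⟩ := Finset.mem_convexHull'.1 hx
  have hne : s.Nonempty := by
    by_contra h
    rw [Finset.not_nonempty_iff_eq_empty] at h
    subst h; simp at b
  obtain ⟨v, hv, h⟩ := Finset.exists_le_of_sum_le hne (f := p) (g := w) (by rw [hp1, b])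
  exact ⟨v, hv, w, a, b, c, h⟩

lemma Acov_inter {s : Finset E} (hs : AffineIndependent ℝ ((↑) : s → E)) (hne : s.Nonempty)
    {p : E → ℝ} (hp1 : ∑ v ∈ s, p v = 1) {x : E} (hx : ∀ v ∈ s, x ∈ Acov s p v) :
    x = ∑ v ∈ s, p v • v := by
  obtain ⟨v0, hv0⟩ := hne
  obtain ⟨w, -, h2, h3, -⟩ := hx v0 hv0
  have hle : ∀ v ∈ s, p v ≤ w v := by
    intro v hv
    obtain ⟨w', -, b2, b3, b4⟩ := hx v hv
    rw [coord_unique hs h2 b2 (h3.trans b3.symm) v hv]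
    exact b4
  have := (Finset.sum_eq_sum_iff_of_le hle).1 (by rw [hp1, h2])
  rw [← h3]
  exact Finset.sum_congr rfl fun v hv => by rw [this v hv]

lemma leb {Q : Type*} [PseudoMetricSpace Q] [CompactSpace Q] (g : Q → E) (hg : Continuous g)
    (S : Set E) (A : E → Set E) (hA : ∀ a ∈ S, IsClosed (A a))
    (h : ∀ q, ∃ a ∈ S, g q ∉ A a) :
    ∃ δ > 0, ∀ q, ∃ a ∈ S, ∀ q', dist q' q < δ → g q' ∉ A a := by
  obtain ⟨δ, hδ, H⟩ := lebesgue_number_lemma_of_metric (s := (Set.univ : Set Q)) (ι := S)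
    (c := fun a => g ⁻¹' (A a)ᶜ) isCompact_univ
    (fun a => ((hA a a.2).isOpen_compl).preimage hg)
    (by
      intro q _
      obtain ⟨a, ha, h'⟩ := h q
      exact Set.mem_iUnion.2 ⟨⟨a, ha⟩, h'⟩)
  refine ⟨δ, hδ, fun q => ?_⟩
  obtain ⟨a, ha⟩ := H q trivial
  exact ⟨a, a.2, fun q' hq' => ha hq'⟩

open Classical in
def lift (X : Set E) (w : E) (g : X → E) (x : E) : E := if h : x ∈ X then g ⟨x, h⟩ else w

lemma lift_mem (X : Set E) (w : E) (g : X → E) {x : E} (h : x ∈ X) : lift X w g x = g ⟨x, h⟩ := by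
  simp [lift, h]

lemma homotopy_inv {X : Set E} [CompactSpace X] (H : C(unitInterval × X, X)) (s : Finset E) (w : E)
    (hw : w ∉ s) (lab : E → E) (hlab : ∀ y, lab y ∈ w ::ₘ s.val) (A : E → Set E)
    (hA : ∀ a ∈ w ::ₘ s.val, IsClosed (A a)) (hlA : ∀ y ∈ X, y ∈ A (lab y))
    (hemp : ∀ y ∈ X, ∃ a ∈ w ::ₘ s.val, y ∉ A a) :
    ∃ δ > 0, ∀ z : Ch E, bd z = 0 → z ∈ Sup {k | k ≠ [] ∧ (∀ x ∈ k, x ∈ X) ∧ Small δ k} →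
      chi s.val (push (lift X w fun x => lab (H (0, x))) z) =
      chi s.val (push (lift X w fun x => lab (H (1, x))) z) := by
  obtain ⟨δ, hδ, hL⟩ := leb (fun q => (H q : E)) (by fun_prop) {a | a ∈ w ::ₘ s.val} A hA
    (fun q => hemp _ (H q).2)
  refine ⟨δ / 2, by positivity, fun z hz hsup => ?_⟩
  have hlc : IsLocallyConstant (fun t : unitInterval =>
      chi s.val (push (lift X w fun x => lab (H (t, x))) z)) := by
    rw [IsLocallyConstant.iff_eventually_eq]
    intro t
    filter_upwards [Metric.ball_mem_nhds t hδ] with t' ht'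
    have hmem : ∀ t x, lift X w (fun x => lab (H (t, x))) x ∈ w ::ₘ s.val := by
      intro t x
      unfold lift
      split_ifs
      · exact hlab _
      · simp
    refine invariance hz hsup (by simpa using hw) s.nodup _ _ (hmem t') (hmem t) ?_
    rintro k ⟨hk, hkX, hks⟩
    obtain ⟨x0, hx0⟩ := List.exists_mem_of_ne_nil k hk
    obtain ⟨a, ha, h⟩ := hL (t, ⟨x0, hkX x0 hx0⟩)
    refine ⟨a, ha, fun x hx => ?_⟩
    rw [lift_mem _ _ _ (hkX x hx), lift_mem _ _ _ (hkX x hx)]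
    have hd : dist x x0 < δ := lt_of_le_of_lt (hks x hx x0 hx0) (by linarith)
    constructor
    · intro e
      refine h (t', ⟨x, hkX x hx⟩) ?_ ?_
      · rw [Prod.dist_eq]; exact max_lt ht' hd
      · rw [← e]; exact hlA _ (H _).2
    · intro e
      refine h (t, ⟨x, hkX x hx⟩) ?_ ?_
      · rw [Prod.dist_eq]; exact max_lt (by simpa using hδ) hd
      · rw [← e]; exact hlA _ (H _).2
  exact hlc.apply_eq_of_preconnectedSpace 0 1

lemma cycle_chain [DecidableEq E] (K : Geometry.SimplicialComplex ℝ E) (hKfin : K.faces.Finite)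
    (r : ℕ) (hr : 1 ≤ r) (c : Finset E → ZMod 2)
    (hcycle : ∀ t : Finset E, t ∈ K.faces → t.card = r →
      (∑ s ∈ hKfin.toFinset.filter (fun s => t ⊆ s ∧ s.card = r + 1), c s) = 0)
    (o : Finset E → List E) (ho : ∀ s, dL (o s) = ∑ x ∈ s, sg (o (s.erase x))) :
    bd (∑ s ∈ hKfin.toFinset.filter (fun s => s.card = r + 1), c s • sg (o s)) = 0 := by
  have key : ∀ s ∈ hKfin.toFinset.filter (fun s => s.card = r + 1),
      dL (o s) = ∑ t ∈ hKfin.toFinset.filter (fun t => t.card = r),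
        if t ⊆ s then sg (o t) else 0 := by
    intro s hs
    simp only [Finset.mem_filter, Set.Finite.mem_toFinset] at hs
    rw [ho, ← Finset.sum_filter]
    refine Finset.sum_nbij (fun x => s.erase x) ?_ ?_ ?_ (fun _ _ => rfl)
    · intro x hx
      have hc : (s.erase x).card = r := by rw [Finset.card_erase_of_mem hx, hs.2]; rfl
      simp only [Finset.mem_filter, Set.Finite.mem_toFinset]
      refine ⟨⟨K.down_closed hs.1 (Finset.erase_subset _ _) ?_, hc⟩, Finset.erase_subset _ _⟩
      rw [← Finset.card_pos]; omega
    · exact Finset.erase_injOn s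
    · intro t ht
      simp only [Finset.coe_filter, Finset.mem_filter, Set.Finite.mem_toFinset] at ht
      obtain ⟨⟨-, h2⟩, h3⟩ := ht
      have : (s \ t).card = 1 := by rw [Finset.card_sdiff_of_subset h3]; omega
      obtain ⟨x, hx⟩ := Finset.card_eq_one.1 this
      have hxs : x ∈ s \ t := by rw [hx]; simp
      refine ⟨x, (Finset.mem_sdiff.1 hxs).1, ?_⟩
      change s.erase x = t
      rw [Finset.erase_eq, ← hx, Finset.sdiff_sdiff_eq_self h3]
  rw [map_sum]
  simp only [map_smul, bd_sg]
  rw [Finset.sum_congr rfl (fun s hs => by rw [key s hs, Finset.smul_sum]), Finset.sum_comm]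
  refine Finset.sum_eq_zero fun t ht => ?_
  simp only [Finset.mem_filter, Set.Finite.mem_toFinset] at ht
  simp only [smul_ite, smul_zero]
  rw [← Finset.sum_filter, ← Finset.sum_smul, Finset.filter_filter]
  have := hcycle t ht.1 ht.2
  simp only [and_comm] at this ⊢
  rw [this, zero_smul]

end geom

end

end St12

/-- Let `X = |K|` be the polyhedron of a finite simplicial `r`-complex
`K` with `H_r(X; ℤ/2) ≠ 0` (encoded, since `dim K = r`, by a nonzero `r`-cycle `c`), and
let `φ : |K| → Y` be a homeomorphism. Then for every continuous `f̄ : Y → Y` homotopic to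
the identity of `Y`, the image under `φ` of the support of `c` is contained in `f̄(Y)`. -/
theorem statement12 (E : Type*) [NormedAddCommGroup E] [NormedSpace ℝ E] [DecidableEq E]
    (Y : Type*) [TopologicalSpace Y]
    (K : Geometry.SimplicialComplex ℝ E) (hKfin : K.faces.Finite)
    (r : ℕ) (hr : 1 ≤ r)
    (hdim : ∀ s ∈ K.faces, s.card ≤ r + 1)
    (φ : ↥K.space ≃ₜ Y)
    (c : Finset E → ZMod 2)
    (hsupp : ∀ s : Finset E, c s ≠ 0 → s ∈ K.faces ∧ s.card = r + 1)
    (hne : c ≠ 0)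
    (hcycle : ∀ t : Finset E, t ∈ K.faces → t.card = r →
      (∑ s ∈ hKfin.toFinset.filter (fun s => t ⊆ s ∧ s.card = r + 1), c s) = 0)
    (fbar : C(Y, Y)) (hfbar : fbar.Homotopic (ContinuousMap.id Y)) :
    (⋃ s ∈ {s : Finset E | c s ≠ 0},
        φ '' {x : ↥K.space | (x : E) ∈ convexHull ℝ (s : Set E)}) ⊆
      Set.range fbar := by
  classical
  intro y hy
  simp only [Set.mem_iUnion] at hy
  obtain ⟨s, hcs, x, hxs, rfl⟩ := hy
  have hcs : c s ≠ 0 := hcs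
  have hxs : (x : E) ∈ convexHull ℝ (s : Set E) := hxs
  by_contra hnot
  obtain ⟨hsK, hscard⟩ := hsupp s hcs
  have hsne : s.Nonempty := K.nonempty_of_mem_faces hsK
  have hind := K.indep hsK
  have hcompact : IsCompact K.space := by
    have : IsCompact (⋃ s ∈ K.faces, convexHull ℝ (s : Set E)) :=
      hKfin.isCompact_biUnion fun s _ => s.finite_toSet.isCompact_convexHull ℝ
    exact this
  haveI : CompactSpace K.space := isCompact_iff_compactSpace.1 hcompact
  obtain ⟨F⟩ := hfbar
  -- the transported homotopy
  let H : C(unitInterval × K.space, K.space) :=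
    ⟨fun q => φ.symm (F (q.1, φ q.2)), by fun_prop⟩
  have H0 : ∀ x, H (0, x) = φ.symm (fbar (φ x)) := fun x => by simp [H]
  have H1 : ∀ x, H (1, x) = x := fun x => by simp [H]
  let R : Set E := Set.range (fun q : K.space => (H (0, q) : E))
  have hRclosed : IsClosed R := (isCompact_range (by fun_prop)).isClosed
  have hxR : (x : E) ∉ R := by
    rintro ⟨q, hq⟩
    have : H (0, q) = x := Subtype.ext hq
    rw [H0] at this
    exact hnot ⟨φ q, by rw [← this]; simp⟩
  -- an interior point of the simplex that is missed
  obtain ⟨p, hp0, hp1, hpR⟩ : ∃ p : E → ℝ, (∀ v ∈ s, 0 < p v) ∧ ∑ v ∈ s, p v = 1 ∧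
      ∑ v ∈ s, p v • v ∉ R := by
    obtain ⟨q, q0, q1, q2⟩ := Finset.mem_convexHull'.1 hxs
    have hcpos : (0 : ℝ) < s.card := by exact_mod_cast hsne.card_pos
    let P : ℝ → E → ℝ := fun e v => (1 - e) * q v + e * (s.card : ℝ)⁻¹
    have hcont : Continuous (fun e => ∑ v ∈ s, P e v • v) := by
      simp only [P]; fun_prop
    have h0 : ∑ v ∈ s, P 0 v • v = (x : E) := by simp [P, q2]
    have hev : ∀ᶠ e in nhds (0 : ℝ), ∑ v ∈ s, P e v • v ∈ Rᶜ :=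
      hcont.continuousAt.eventually_mem (hRclosed.isOpen_compl.mem_nhds (by rw [h0]; exact hxR))
    obtain ⟨ε, hε, hball⟩ := Metric.eventually_nhds_iff.1 hev
    let e := min (ε / 2) (1 / 2)
    have he : 0 < e := by positivity
    have he1 : e ≤ 1 / 2 := min_le_right _ _
    have he2 : e ≤ ε / 2 := min_le_left _ _
    refine ⟨P e, ?_, ?_, hball ?_⟩
    · intro v hv
      have := q0 v hv
      have h1 : 0 ≤ (1 - e) * q v := mul_nonneg (by linarith) this
      have h2 : 0 < e * (s.card : ℝ)⁻¹ := by positivity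
      simp only [P]; linarith
    · simp only [P]
      rw [Finset.sum_add_distrib, ← Finset.mul_sum, q1, Finset.sum_const, nsmul_eq_mul]
      field_simp
      ring
    · rw [Real.dist_eq, sub_zero, abs_of_pos he]; linarith
  -- the union of all other simplices
  let Wd : Set E := ⋃ t ∈ K.faces \ {s}, convexHull ℝ (t : Set E)
  have hWclosed : IsClosed Wd :=
    ((hKfin.subset Set.diff_subset).isCompact_biUnion
      fun s _ => s.finite_toSet.isCompact_convexHull ℝ).isClosed
  have hPs : ∑ v ∈ s, p v • v ∈ convexHull ℝ (s : Set E) :=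
    Finset.mem_convexHull'.2 ⟨p, fun v hv => (hp0 v hv).le, hp1, rfl⟩
  have hPW : ∑ v ∈ s, p v • v ∉ Wd := by
    intro h
    simp only [Wd, Set.mem_iUnion] at h
    obtain ⟨t, ⟨htK, hts⟩, ht⟩ := h
    have h2 := K.inter_subset_convexHull hsK htK ⟨hPs, ht⟩
    rw [← Finset.coe_inter] at h2
    have hsub : s ⊆ t := fun v hv =>
      (Finset.mem_inter.1 (St12.coord_face hind Finset.inter_subset_left hp1 rfl h2 hv
        (hp0 v hv))).2
    exact hts (Finset.eq_of_subset_of_card_le hsub (by rw [hscard]; exact hdim t htK)).symm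
  -- a spare label
  obtain ⟨w, hw⟩ : ∃ w, w ∉ s := by
    have hnt : Nontrivial E := by
      obtain ⟨a, -, b, -, hab⟩ := Finset.one_lt_card.1 (show 1 < s.card by omega)
      exact ⟨a, b, hab⟩
    haveI : Infinite E := Module.Free.infinite ℝ E
    exact Infinite.exists_notMem_finset s
  -- the labels
  have hΛ : ∀ x, ∃ v, x ∈ convexHull ℝ (s : Set E) → v ∈ s ∧ x ∈ St12.Acov s p v := by
    intro x
    by_cases h : x ∈ convexHull ℝ (s : Set E)
    · obtain ⟨v, h1, h2⟩ := St12.Acov_cover hp1 h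
      exact ⟨v, fun _ => ⟨h1, h2⟩⟩
    · exact ⟨w, fun h' => absurd h' h⟩
  choose Λ hΛ using hΛ
  let lab : E → E := fun y => if y ∈ Wd then w else if y ∈ convexHull ℝ (s : Set E) then Λ y else w
  let A : E → Set E := fun a => if a = w then Wd else St12.Acov s p a
  have hAw : A w = Wd := by simp [A]
  have hAs : ∀ v ∈ s, A v = St12.Acov s p v := by
    intro v hv
    have : v ≠ w := by rintro rfl; exact hw hv
    simp [A, this]
  have hlab : ∀ y, lab y ∈ w ::ₘ s.val := by
    intro y
    simp only [lab]
    split_ifs with h1 h2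
    · simp
    · exact Multiset.mem_cons_of_mem (hΛ y h2).1
    · simp
  have hA : ∀ a ∈ w ::ₘ s.val, IsClosed (A a) := by
    intro a ha
    rcases Multiset.mem_cons.1 ha with rfl | ha
    · rw [hAw]; exact hWclosed
    · rw [hAs a ha]; exact St12.Acov_closed s p a ha
  have hlA : ∀ y ∈ K.space, y ∈ A (lab y) := by
    intro y hy
    by_cases h1 : y ∈ Wd
    · have : lab y = w := by simp [lab, h1]
      rw [this, hAw]; exact h1
    · have h2 : y ∈ convexHull ℝ (s : Set E) := by
        obtain ⟨t, ht, hyt⟩ := Geometry.SimplicialComplex.mem_space_iff.1 hy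
        by_cases hts : t = s
        · rwa [hts] at hyt
        · exact absurd (Set.mem_biUnion (show t ∈ K.faces \ {s} from ⟨ht, hts⟩) hyt) h1
      have : lab y = Λ y := by simp [lab, h1, h2]
      rw [this, hAs _ (hΛ y h2).1]; exact (hΛ y h2).2
  have hemp : ∀ y ∈ K.space, ∃ a ∈ w ::ₘ s.val, y ∉ A a := by
    intro y _
    by_contra! hcon
    have hyP := St12.Acov_inter hind hsne hp1 (x := y) (fun v hv => by
      rw [← hAs v hv]; exact hcon v (Multiset.mem_cons_of_mem hv))
    have := hcon w (Multiset.mem_cons_self _ _)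
    rw [hAw, hyP] at this
    exact hPW this
  -- Lebesgue numbers
  obtain ⟨δ1, hδ1, L1⟩ := St12.homotopy_inv H s w hw lab hlab A hA hlA hemp
  obtain ⟨δ2, hδ2, L2⟩ := St12.leb (fun q : K.space => (H (0, q) : E)) (by fun_prop)
    (s : Set E) A (fun a ha => hA a (Multiset.mem_cons_of_mem ha)) (by
      intro q
      by_contra! hcon
      have hyP := St12.Acov_inter hind hsne hp1 (x := (H (0, q) : E)) (fun v hv => by
        rw [← hAs v hv]; exact hcon v hv)
      exact hpR ⟨q, hyP⟩)
  obtain ⟨δ3, hδ3, L3⟩ := St12.leb (fun q : K.space => (q : E)) (by fun_prop)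
    {a | a ∈ w ::ₘ s.val} A hA (fun q => hemp q q.2)
  let δ := min δ1 (min (δ2 / 2) (δ3 / 2))
  have hδ : 0 < δ := by positivity
  have hd1 : δ ≤ δ1 := min_le_left _ _
  have hd2 : δ < δ2 := by
    have : δ ≤ δ2 / 2 := (min_le_right _ _).trans (min_le_left _ _)
    linarith
  have hd3 : δ < δ3 := by
    have : δ ≤ δ3 / 2 := (min_le_right _ _).trans (min_le_right _ _)
    linarith
  -- the number of subdivisions
  let D := Metric.diam K.space
  have hD : 0 ≤ D := Metric.diam_nonneg
  obtain ⟨N, hN⟩ := exists_pow_lt_of_lt_one (show 0 < δ / (D + 1) by positivity)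
    (show (r / (r + 1) : ℝ) < 1 by rw [div_lt_one (by positivity)]; linarith)
  have hND : (r / (r + 1) : ℝ) ^ N * D ≤ δ := by
    rw [lt_div_iff₀ (by positivity)] at hN
    have : 0 ≤ (r / (r + 1) : ℝ) ^ N := by positivity
    nlinarith
  -- the chain
  obtain ⟨o, ho1, ho2⟩ := St12.exists_order (V := E)
  have homem : ∀ t : Finset E, ∀ x, x ∈ o t ↔ x ∈ t := by
    intro t x
    rw [← Multiset.mem_coe, ho1]; rfl
  have holen : ∀ t : Finset E, (o t).length = t.card := by
    intro t
    rw [← Multiset.coe_card, ho1]; rfl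
  have hohull : ∀ t : Finset E, St12.hull (o t) = convexHull ℝ (t : Set E) := by
    intro t
    have : {y | y ∈ o t} = (t : Set E) := by ext y; simp [homem]
    rw [St12.hull, this]
  let Fs := hKfin.toFinset.filter (fun s => s.card = r + 1)
  have hFs : ∀ t, t ∈ Fs ↔ t ∈ K.faces ∧ t.card = r + 1 := by intro t; simp [Fs]
  let z0 : St12.Ch E := ∑ t ∈ Fs, c t • St12.sg (o t)
  let T : St12.Ch E →ₗ[ZMod 2] St12.Ch E := St12.sdN (r + 1) N
  have hz0 : z0 ∈ St12.Sup {l | l.length = r + 1} := by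
    refine Submodule.sum_mem _ fun t ht => Submodule.smul_mem _ _ (St12.sg_mem ?_)
    change (o t).length = r + 1
    rw [holen]; exact ((hFs t).1 ht).2
  have hbz0 : St12.bd z0 = 0 := St12.cycle_chain K hKfin r hr c hcycle o ho2
  have hbz : St12.bd (T z0) = 0 := by
    simp only [T]
    rw [St12.bd_sdN _ _ _ hz0, hbz0, map_zero]
  have hpiece : ∀ t ∈ Fs, T (St12.sg (o t)) ∈ St12.Sup {k | k ≠ [] ∧
      (∀ x ∈ k, x ∈ convexHull ℝ (t : Set E)) ∧ St12.Small δ k} := by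
    intro t ht
    obtain ⟨htK, htc⟩ := (hFs t).1 ht
    refine St12.sup_mono ?_ (St12.sdN_sup r (r + 1) le_rfl N (o t) (by rw [holen, htc]))
    rintro k ⟨k1, k2, k3⟩
    refine ⟨by rintro rfl; simp at k1, fun x hx => by rw [← hohull]; exact k2 x hx, ?_⟩
    have hsm : St12.Small D (o t) := fun a ha b hb =>
      Metric.dist_le_diam_of_mem hcompact.isBounded
        (Geometry.SimplicialComplex.subset_space htK ((homem t a).1 ha))
        (Geometry.SimplicialComplex.subset_space htK ((homem t b).1 hb))
    exact fun a ha b hb => (k3 D hsm a ha b hb).trans hND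
  have hTz : T z0 ∈ St12.Sup {k | k ≠ [] ∧ (∀ x ∈ k, x ∈ K.space) ∧ St12.Small δ k} := by
    simp only [z0, map_sum, map_smul]
    refine Submodule.sum_mem _ fun t ht => Submodule.smul_mem _ _ ?_
    refine St12.sup_mono ?_ (hpiece t ht)
    rintro k ⟨k1, k2, k3⟩
    exact ⟨k1, fun x hx => Geometry.SimplicialComplex.convexHull_subset_space ((hFs t).1 ht).1
      (k2 x hx), k3⟩
  have hinv := L1 (T z0) hbz (St12.sup_mono (by
    rintro k ⟨k1, k2, k3⟩
    exact ⟨k1, k2, fun a ha b hb => (k3 a ha b hb).trans hd1⟩) hTz)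
  -- the count at time `0`
  have hc0 : St12.chi s.val (St12.push (St12.lift K.space w fun x => lab (H (0, x))) (T z0)) = 0 := by
    refine St12.sup_eq (St12.chi s.val ∘ₗ St12.push _) 0 ?_ hTz
    rintro k ⟨k1, k2, k3⟩
    rw [LinearMap.comp_apply, St12.push_sg, St12.chi_sg, if_neg]
    · rfl
    intro e
    obtain ⟨x0, hx0⟩ := List.exists_mem_of_ne_nil k k1
    obtain ⟨a, ha, h⟩ := L2 ⟨x0, k2 x0 hx0⟩
    have ha' : a ∈ s.val := ha
    rw [← e, Multiset.mem_coe] at ha'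
    obtain ⟨x1, hx1, hxa⟩ := List.mem_map.1 ha'
    rw [St12.lift_mem _ _ _ (k2 x1 hx1)] at hxa
    refine h ⟨x1, k2 x1 hx1⟩ (lt_of_le_of_lt (k3 x1 hx1 x0 hx0) hd2) ?_
    rw [← hxa]
    exact hlA _ (H _).2
  -- the count at time `1`
  have hother : ∀ t ∈ Fs, t ≠ s →
      St12.chi s.val (St12.push (St12.lift K.space w fun x => lab (H (1, x)))
        (T (St12.sg (o t)))) = 0 := by
    intro t ht hts
    have htK := ((hFs t).1 ht).1
    refine St12.sup_eq (St12.chi s.val ∘ₗ St12.push _) 0 ?_ (hpiece t ht)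
    rintro k ⟨k1, k2, k3⟩
    rw [LinearMap.comp_apply, St12.push_sg, St12.chi_sg, if_neg]
    · rfl
    intro e
    obtain ⟨x0, hx0⟩ := List.exists_mem_of_ne_nil k k1
    have hx0K : x0 ∈ K.space := Geometry.SimplicialComplex.convexHull_subset_space htK (k2 x0 hx0)
    have hx0W : x0 ∈ Wd := Set.mem_biUnion (show t ∈ K.faces \ {s} from ⟨htK, hts⟩) (k2 x0 hx0)
    have : w ∈ s.val := by
      rw [← e, Multiset.mem_coe]
      refine List.mem_map.2 ⟨x0, hx0, ?_⟩
      rw [St12.lift_mem _ _ _ hx0K, H1]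
      simp [lab, hx0W]
    exact hw this
  have hsFs : s ∈ Fs := (hFs s).2 ⟨hsK, hscard⟩
  have hself : St12.chi s.val (St12.push (St12.lift K.space w fun x => lab (H (1, x)))
      (T (St12.sg (o s)))) = 1 := by
    have hsp := St12.sperner N Λ (o s) (by rw [← Multiset.coe_nodup, ho1]; exact s.nodup) (by
      intro t hts x hx
      have ht : t.toFinset ⊆ s := fun v hv => (homem s v).1 (hts (List.mem_toFinset.1 hv))
      have hx' : x ∈ convexHull ℝ (t.toFinset : Set E) := by
        rw [List.coe_toFinset]; exact hx
      have hxs' : x ∈ convexHull ℝ (s : Set E) :=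
        convexHull_mono (Finset.coe_subset.2 ht) hx'
      exact List.mem_toFinset.1 (St12.Acov_face hind ht hp0 hx' (hΛ x hxs').1 (hΛ x hxs').2))
    rw [holen, hscard, ho1] at hsp
    rw [← hsp]
    refine St12.sup_eq (St12.chi s.val ∘ₗ St12.push _) (St12.chi s.val ∘ₗ St12.push Λ) ?_
      (hpiece s hsFs)
    rintro k ⟨k1, k2, k3⟩
    simp only [LinearMap.comp_apply, St12.push_sg]
    have hkK : ∀ x ∈ k, x ∈ K.space := fun x hx =>
      Geometry.SimplicialComplex.convexHull_subset_space hsK (k2 x hx)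
    by_cases hkW : ∃ x ∈ k, x ∈ Wd
    · obtain ⟨x1, hx1, hx1W⟩ := hkW
      rw [St12.chi_sg, St12.chi_sg, if_neg, if_neg]
      · intro e
        obtain ⟨a, ha, h⟩ := L3 ⟨x1, hkK x1 hx1⟩
        rcases Multiset.mem_cons.1 ha with rfl | ha
        · exact h ⟨x1, hkK x1 hx1⟩ (by simpa using hδ3) (by rw [hAw]; exact hx1W)
        · have has : a ∈ s := ha
          rw [← e, Multiset.mem_coe] at ha
          obtain ⟨x2, hx2, rfl⟩ := List.mem_map.1 ha
          refine h ⟨x2, hkK x2 hx2⟩ (lt_of_le_of_lt (k3 x2 hx2 x1 hx1) hd3) ?_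
          rw [hAs _ has]
          exact (hΛ x2 (k2 x2 hx2)).2
      · intro e
        have : w ∈ s.val := by
          rw [← e, Multiset.mem_coe]
          refine List.mem_map.2 ⟨x1, hx1, ?_⟩
          rw [St12.lift_mem _ _ _ (hkK x1 hx1), H1]
          simp [lab, hx1W]
        exact hw this
    · push Not at hkW
      have : k.map (St12.lift K.space w fun x => lab (H (1, x))) = k.map Λ := by
        refine List.map_congr_left fun x hx => ?_
        rw [St12.lift_mem _ _ _ (hkK x hx), H1]
        simp [lab, hkW x hx, k2 x hx]
      rw [this]
  have hc1 : St12.chi s.val (St12.push (St12.lift K.space w fun x => lab (H (1, x))) (T z0)) =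
      c s := by
    simp only [z0, map_sum, map_smul]
    rw [Finset.sum_eq_single s]
    · rw [hself]; simp
    · intro t ht hts
      rw [hother t ht hts, smul_zero]
    · exact fun h => absurd hsFs h
  rw [hc0, hc1] at hinv
  exact hcs hinv.symm
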